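/- Let ε > 0 and let U ⊆ ℝ^m be open, and let u be a smooth constrained minimizer of H_ε on U. For a, b ∈ ℝ^{n+1} let a ∧ b denote the skew-symmetric (n+1)×(n+1) matrix with entries (a ∧ b)_{jk} = a_j b_k − a_k b_j. Then u satisfies, pointwise on U and entrywise as matrices, the divergence-form equation: 2 Δ( ∑_α ∂_α( ∂_α u ∧ u ) ) − 4 ∑_α ∂_α( Δu ∧ ∂_α u ) − ε(m+1) ∑_α ∂_α( |∇u|^{m−1} (∂_α u ∧ u) ) = 0. -/

import Mathlib

open MeasureTheory Filter Metric
open scoped ENNReal RealInnerProductSpace Topology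

noncomputable section

/-- The `α`-th partial derivative of a map defined on `ℝ^m`. -/
def pderiv1 {m : ℕ} {F : Type*} [NormedAddCommGroup F] [NormedSpace ℝ F]
    (f : EuclideanSpace ℝ (Fin m) → F) (α : Fin m) (x : EuclideanSpace ℝ (Fin m)) : F :=
  fderiv ℝ f x (EuclideanSpace.single α 1)

/-- The second partial derivative `∂_α ∂_β f`. -/
def pderiv2 {m : ℕ} {F : Type*} [NormedAddCommGroup F] [NormedSpace ℝ F]
    (f : EuclideanSpace ℝ (Fin m) → F) (α β : Fin m) (x : EuclideanSpace ℝ (Fin m)) : F :=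
  pderiv1 (fun y => pderiv1 f β y) α x

/-- The (componentwise) Laplacian `Δf = ∑_α ∂²_{αα} f`. -/
def lap {m : ℕ} {F : Type*} [NormedAddCommGroup F] [NormedSpace ℝ F]
    (f : EuclideanSpace ℝ (Fin m) → F) (x : EuclideanSpace ℝ (Fin m)) : F :=
  ∑ α : Fin m, pderiv2 f α α x

/-- `|∇f|² = ∑_α |∂_α f|²`. -/
def gradSq {m : ℕ} {F : Type*} [NormedAddCommGroup F] [NormedSpace ℝ F]
    (f : EuclideanSpace ℝ (Fin m) → F) (x : EuclideanSpace ℝ (Fin m)) : ℝ :=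
  ∑ α : Fin m, ‖pderiv1 f α x‖ ^ 2

/-- `|∇f|`. -/
def gradNorm {m : ℕ} {F : Type*} [NormedAddCommGroup F] [NormedSpace ℝ F]
    (f : EuclideanSpace ℝ (Fin m) → F) (x : EuclideanSpace ℝ (Fin m)) : ℝ :=
  Real.sqrt (gradSq f x)

/-- The perturbed Hessian energy `H_ε(u, U) = ∫_U |Δu|² + ε |∇u|^{m+1} dx`
(as an extended nonnegative real). -/
def HEnergy {m n : ℕ} (eps : ℝ) (u : EuclideanSpace ℝ (Fin m) → EuclideanSpace ℝ (Fin (n + 1)))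
    (U : Set (EuclideanSpace ℝ (Fin m))) : ℝ≥0∞ :=
  ∫⁻ x in U, ENNReal.ofReal (‖lap u x‖ ^ 2 + eps * gradNorm u x ^ (m + 1))

/-- `u` is a smooth constrained minimizer of `H_ε` on the open set `U`: it is smooth and
sphere-valued on `U`, has finite energy, and minimizes `H_ε(·, U)` among smooth
sphere-valued maps agreeing with `u` outside a compact subset of `U`. -/
def IsHMinimizer {m n : ℕ} (eps : ℝ)
    (u : EuclideanSpace ℝ (Fin m) → EuclideanSpace ℝ (Fin (n + 1)))
    (U : Set (EuclideanSpace ℝ (Fin m))) : Prop :=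
  ContDiffOn ℝ (⊤ : ℕ∞) u U ∧ (∀ x ∈ U, ‖u x‖ = 1) ∧ HEnergy eps u U < ⊤ ∧
    ∀ v : EuclideanSpace ℝ (Fin m) → EuclideanSpace ℝ (Fin (n + 1)),
      ContDiffOn ℝ (⊤ : ℕ∞) v U → (∀ x ∈ U, ‖v x‖ = 1) →
      (∃ K, IsCompact K ∧ K ⊆ U ∧ ∀ x ∉ K, v x = u x) →
      HEnergy eps u U ≤ HEnergy eps v U

/-- The ε-stationarity (first-variation) identity on `U`. -/
def IsStationaryH {m n : ℕ} (eps : ℝ)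
    (u : EuclideanSpace ℝ (Fin m) → EuclideanSpace ℝ (Fin (n + 1)))
    (U : Set (EuclideanSpace ℝ (Fin m))) : Prop :=
  ∀ ξ : EuclideanSpace ℝ (Fin m) → EuclideanSpace ℝ (Fin m),
    ContDiff ℝ (⊤ : ℕ∞) ξ → HasCompactSupport ξ → tsupport ξ ⊆ U →
    ∫ x in U,
      (-((‖lap u x‖ ^ 2 + eps * gradNorm u x ^ (m + 1)) * (∑ α : Fin m, pderiv1 ξ α x α))
        + 4 * (∑ α : Fin m, ∑ β : Fin m, ⟪lap u x, pderiv2 u α β x⟫ * pderiv1 ξ α x β)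
        + 2 * (∑ β : Fin m, ⟪lap u x, pderiv1 u β x⟫ * (∑ α : Fin m, pderiv2 ξ α α x β))
        + eps * (m + 1) * gradNorm u x ^ (m - 1) *
            (∑ α : Fin m, ∑ β : Fin m, ⟪pderiv1 u α x, pderiv1 u β x⟫ * pderiv1 ξ α x β)) = 0

/-- The wedge `a ∧ b` of two vectors in `ℝ^{n+1}`: the skew-symmetric matrix with entries
`(a ∧ b)_{jk} = a_j b_k − a_k b_j`. -/
def wedge {n : ℕ} (a b : EuclideanSpace ℝ (Fin (n + 1))) :
    Fin (n + 1) → Fin (n + 1) → ℝ :=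
  fun j k => a j * b k - a k * b j

open TopologicalSpace (Opens)
open scoped Distributions

/-!
The constraint `|u| = 1` and the energy are invariant under rotations of the target, and the
equation is the corresponding Noether conservation law. For a skew-adjoint `J` and a test function
`φ`, the maps `e^{tφJ}u` are competitors for `u`. Since `e^{tφJ}` is an isometry, `|Δ(e^{tφJ}u)|`
and `|∇(e^{tφJ}u)|` are the norms of polynomials in `t` whose coefficients involve only `u`, `Ju`,
`JJu` and derivatives, so the energy can be differentiated at the minimum `t = 0`. This gives
`∫ 2⟨Δu, Ju⟩Δφ + ∑_α (4⟨Δu, J∂_αu⟩ + ε(m+1)|∇u|^{m-1}⟨∂_αu, Ju⟩)∂_αφ = 0`. The flux is `C¹` even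
where `∇u = 0`, because `x ↦ |x|^k x` is `C¹`, hence one can integrate by parts and drop `φ`. With
`J = E_{jk} − E_{kj}` one has `⟨a, Jb⟩ = (a ∧ b)_{jk}`, and `∑_α ∂_α⟨∂_αu, Ju⟩ = ⟨Δu, Ju⟩` because
`⟨∂_αu, J∂_αu⟩ = 0`.
-/

section PartialDerivatives

variable {m : ℕ} {F G : Type*} [NormedAddCommGroup F] [NormedSpace ℝ F]
  [NormedAddCommGroup G] [NormedSpace ℝ G]
  {f g : EuclideanSpace ℝ (Fin m) → F} {U : Set (EuclideanSpace ℝ (Fin m))}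
  {x : EuclideanSpace ℝ (Fin m)}

lemma pderiv1_eventuallyEq (h : f =ᶠ[𝓝 x] g) (α : Fin m) : pderiv1 f α =ᶠ[𝓝 x] pderiv1 g α :=
  h.fderiv.mono fun _ hy => by rw [pderiv1, hy, pderiv1]

lemma lap_eq_of_eventuallyEq (h : f =ᶠ[𝓝 x] g) : lap f x = lap g x :=
  Finset.sum_congr rfl fun α _ =>
    (pderiv1_eventuallyEq (pderiv1_eventuallyEq h α) α).eq_of_nhds

lemma gradNorm_eq_of_eventuallyEq (h : f =ᶠ[𝓝 x] g) : gradNorm f x = gradNorm g x := by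
  simp only [gradNorm, gradSq, (pderiv1_eventuallyEq h _).eq_of_nhds]

lemma pderiv1_clm (L : F →L[ℝ] G) (hf : DifferentiableAt ℝ f x) (α : Fin m) :
    pderiv1 (fun y => L (f y)) α x = L (pderiv1 f α x) :=
  congrArg (· (EuclideanSpace.single α 1)) (L.hasFDerivAt.comp x hf.hasFDerivAt).fderiv

lemma pderiv1_add (hf : DifferentiableAt ℝ f x) (hg : DifferentiableAt ℝ g x) (α : Fin m) :
    pderiv1 (fun y => f y + g y) α x = pderiv1 f α x + pderiv1 g α x := by
  simp [pderiv1, fderiv_fun_add hf hg]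

lemma pderiv1_smul {c : EuclideanSpace ℝ (Fin m) → ℝ} (hc : DifferentiableAt ℝ c x)
    (hf : DifferentiableAt ℝ f x) (α : Fin m) :
    pderiv1 (fun y => c y • f y) α x = c x • pderiv1 f α x + pderiv1 c α x • f x := by
  simp [pderiv1, fderiv_fun_smul hc hf]

lemma pderiv1_const_smul (hf : DifferentiableAt ℝ f x) (c : ℝ) (α : Fin m) :
    pderiv1 (fun y => c • f y) α x = c • pderiv1 f α x :=
  pderiv1_clm (c • ContinuousLinearMap.id ℝ F) hf α

lemma contDiffOn_pderiv1 {k l : WithTop ℕ∞} (hU : IsOpen U) (hf : ContDiffOn ℝ l f U)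
    (hkl : k + 1 ≤ l) (α : Fin m) : ContDiffOn ℝ k (pderiv1 f α) U :=
  (hf.fderiv_of_isOpen hU hkl).clm_apply contDiffOn_const

lemma contDiffOn_lap {k l : WithTop ℕ∞} (hU : IsOpen U) (hf : ContDiffOn ℝ l f U)
    (hkl : k + 2 ≤ l) : ContDiffOn ℝ k (lap f) U :=
  ContDiffOn.sum fun α _ => contDiffOn_pderiv1 hU
    (contDiffOn_pderiv1 (k := k + 1) hU hf (by rwa [add_assoc, one_add_one_eq_two]) α) le_rfl α

lemma differentiableOn_pderiv1 (hU : IsOpen U) (hf : ContDiffOn ℝ 2 f U) (α : Fin m) :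
    DifferentiableOn ℝ (pderiv1 f α) U :=
  (contDiffOn_pderiv1 (k := 1) hU hf (by norm_num) α).differentiableOn one_ne_zero

lemma lap_clm (L : F →L[ℝ] G) (hU : IsOpen U) (hf : ContDiffOn ℝ 2 f U) (hx : x ∈ U) :
    lap (fun y => L (f y)) x = L (lap f x) := by
  rw [lap, lap, map_sum]
  refine Finset.sum_congr rfl fun α _ => ?_
  have hL : pderiv1 (fun y => L (f y)) α =ᶠ[𝓝 x] fun y => L (pderiv1 f α y) := by
    filter_upwards [hU.mem_nhds hx] with y hy using
      pderiv1_clm L ((hf.differentiableOn two_ne_zero).differentiableAt (hU.mem_nhds hy)) α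
  rw [pderiv2, (pderiv1_eventuallyEq hL α).eq_of_nhds]
  exact pderiv1_clm L ((differentiableOn_pderiv1 hU hf α).differentiableAt (hU.mem_nhds hx)) α

lemma lap_const_smul (hU : IsOpen U) (hf : ContDiffOn ℝ 2 f U) (hx : x ∈ U) (c : ℝ) :
    lap (fun y => c • f y) x = c • lap f x :=
  lap_clm (c • ContinuousLinearMap.id ℝ F) hU hf hx

end PartialDerivatives

section TestFunctions

variable {m : ℕ} {Ω : Opens (EuclideanSpace ℝ (Fin m))} {f : EuclideanSpace ℝ (Fin m) → ℝ}

lemma exists_testFunction_coe_eq_pderiv1 (φ : 𝓓(Ω, ℝ)) (α : Fin m) :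
    ∃ ψ : 𝓓(Ω, ℝ), ⇑ψ = pderiv1 φ α := by
  refine ⟨TestFunction.lineDerivCLM ℝ (EuclideanSpace.single α 1) φ, ?_⟩
  ext x
  rw [TestFunction.lineDerivCLM_eq_fderivCLM, TestFunction.fderivCLM_apply_of_le φ (by simp),
    pderiv1]

lemma integrable_mul_testFunction (hf : ContinuousOn f Ω) (φ : 𝓓(Ω, ℝ)) :
    Integrable fun x => f x * φ x :=
  φ.integrable_bilin (ContinuousLinearMap.mul ℝ ℝ).flip
    (hf.locallyIntegrableOn Ω.isOpen.measurableSet)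

lemma integrable_mul_pderiv1_testFunction (hf : ContinuousOn f Ω) (φ : 𝓓(Ω, ℝ)) (α : Fin m) :
    Integrable fun x => f x * pderiv1 φ α x := by
  obtain ⟨ψ, hψ⟩ := exists_testFunction_coe_eq_pderiv1 φ α
  exact hψ ▸ integrable_mul_testFunction hf ψ

lemma integrable_mul_pderiv2_testFunction (hf : ContinuousOn f Ω) (φ : 𝓓(Ω, ℝ)) (α β : Fin m) :
    Integrable fun x => f x * pderiv2 φ α β x := by
  obtain ⟨ψ, hψ⟩ := exists_testFunction_coe_eq_pderiv1 φ β
  have hfψ := integrable_mul_pderiv1_testFunction hf ψ α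
  rwa [hψ] at hfψ

lemma integrable_mul_lap_testFunction (hf : ContinuousOn f Ω) (φ : 𝓓(Ω, ℝ)) :
    Integrable fun x => f x * lap φ x := by
  simp only [lap, Finset.mul_sum]
  exact integrable_finsetSum _ fun α _ => integrable_mul_pderiv2_testFunction hf φ α α

lemma integral_mul_pderiv1_testFunction (hf : ContDiffOn ℝ 1 f Ω) (φ : 𝓓(Ω, ℝ)) (α : Fin m) :
    ∫ x, f x * pderiv1 φ α x = -∫ x, pderiv1 f α x * φ x :=
  integral_mul_fderiv_eq_neg_fderiv_mul_of_integrable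
    (integrable_mul_testFunction
      (contDiffOn_pderiv1 (k := 0) Ω.isOpen hf (by simp) α).continuousOn φ)
    (integrable_mul_pderiv1_testFunction hf.continuousOn φ α)
    (integrable_mul_testFunction hf.continuousOn φ)
    (fun x hx => (hf.differentiableOn one_ne_zero).differentiableAt
      (Ω.isOpen.mem_nhds (φ.tsupport_subset hx)))
    (fun x _ => (φ.contDiff.differentiable (by simp)) x)

lemma integral_mul_pderiv2_testFunction (hf : ContDiffOn ℝ 2 f Ω) (φ : 𝓓(Ω, ℝ))
    (α β : Fin m) : ∫ x, f x * pderiv2 φ α β x = ∫ x, pderiv2 f β α x * φ x := by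
  obtain ⟨ψ, hψ⟩ := exists_testFunction_coe_eq_pderiv1 φ β
  calc ∫ x, f x * pderiv2 φ α β x
      = ∫ x, f x * pderiv1 ψ α x := by rw [hψ]; rfl
    _ = -∫ x, pderiv1 f α x * pderiv1 φ β x := by
      rw [integral_mul_pderiv1_testFunction (hf.of_le one_le_two), hψ]
    _ = ∫ x, pderiv2 f β α x * φ x := by
      rw [integral_mul_pderiv1_testFunction
        (contDiffOn_pderiv1 Ω.isOpen hf (by norm_num) α), neg_neg]
      rfl

lemma integral_mul_lap_testFunction (hf : ContDiffOn ℝ 2 f Ω) (φ : 𝓓(Ω, ℝ)) :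
    ∫ x, f x * lap φ x = ∫ x, lap f x * φ x := by
  have hddf (α : Fin m) : ContinuousOn (pderiv2 f α α) Ω :=
    (contDiffOn_pderiv1 (k := 0) Ω.isOpen
      (contDiffOn_pderiv1 (k := 1) Ω.isOpen hf (by norm_num) α) (by simp) α).continuousOn
  simp only [lap, Finset.mul_sum, Finset.sum_mul]
  rw [integral_finsetSum _ fun α _ =>
      integrable_mul_pderiv2_testFunction hf.continuousOn φ α α,
    integral_finsetSum _ fun α _ => integrable_mul_testFunction (hddf α) φ]
  exact Finset.sum_congr rfl fun α _ => integral_mul_pderiv2_testFunction hf φ α α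

lemma eqOn_zero_of_integral_mul_testFunction (hf : ContinuousOn f Ω)
    (h : ∀ φ : 𝓓(Ω, ℝ), ∫ x, f x * φ x = 0) : ∀ x ∈ Ω, f x = 0 := by
  have hae : ∀ᵐ x, x ∈ (Ω : Set _) → f x = 0 :=
    Ω.isOpen.ae_eq_zero_of_integral_contDiff_smul_eq_zero
      (hf.locallyIntegrableOn Ω.isOpen.measurableSet) fun φ hφ hcφ hsφ => by
        simp only [smul_eq_mul, mul_comm]
        exact h ⟨φ, hφ, hcφ, hsφ⟩
  exact Measure.eqOn_open_of_ae_eq ((ae_restrict_iff' Ω.isOpen.measurableSet).mpr hae)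
    Ω.isOpen hf continuousOn_const

lemma lap_sub_sum_pderiv1_eq_zero {P : EuclideanSpace ℝ (Fin m) → ℝ}
    {R : Fin m → EuclideanSpace ℝ (Fin m) → ℝ} (hP : ContDiffOn ℝ 2 P Ω)
    (hR : ∀ α, ContDiffOn ℝ 1 (R α) Ω)
    (h : ∀ φ : 𝓓(Ω, ℝ), ∫ x, (P x * lap φ x + ∑ α, R α x * pderiv1 φ α x) = 0) :
    ∀ x ∈ Ω, lap P x - ∑ α, pderiv1 (R α) α x = 0 := by
  have hlap : ContinuousOn (lap P) Ω :=
    (contDiffOn_lap (k := 0) Ω.isOpen hP (by simp)).continuousOn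
  have hdiv (α : Fin m) : ContinuousOn (pderiv1 (R α) α) Ω :=
    (contDiffOn_pderiv1 (k := 0) Ω.isOpen (hR α) (by simp) α).continuousOn
  refine eqOn_zero_of_integral_mul_testFunction
    (hlap.sub (continuousOn_finsetSum _ fun α _ => hdiv α)) fun φ => ?_
  have hflux := fun α (_ : α ∈ Finset.univ) =>
    integrable_mul_pderiv1_testFunction (hR α).continuousOn φ α
  have hdivφ := fun α (_ : α ∈ Finset.univ) => integrable_mul_testFunction (hdiv α) φ
  rw [← h φ, integral_add (integrable_mul_lap_testFunction hP.continuousOn φ)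
    (integrable_finsetSum _ hflux), integral_finsetSum _ hflux]
  simp only [sub_mul, Finset.sum_mul]
  rw [integral_sub (integrable_mul_testFunction hlap φ) (integrable_finsetSum _ hdivφ),
    integral_finsetSum _ hdivφ, integral_mul_lap_testFunction hP]
  simp only [integral_mul_pderiv1_testFunction (hR _), Finset.sum_neg_distrib, sub_eq_add_neg]

end TestFunctions

section GaugeTransform

variable {m : ℕ} {V : Type*} [NormedAddCommGroup V] [NormedSpace ℝ V]
  {J : V →L[ℝ] V} {U : Set (EuclideanSpace ℝ (Fin m))} {θ : EuclideanSpace ℝ (Fin m) → ℝ}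
  {w : EuclideanSpace ℝ (Fin m) → V} {x : EuclideanSpace ℝ (Fin m)}

/-- The gauge transform `e^{θJ}w` of a map `w`, with generator `J` and angle function `θ`. It
supplies the variations of `w` that preserve `|w|` when `J` is skew-adjoint. -/
def gaugeTransform (J : V →L[ℝ] V) (θ : EuclideanSpace ℝ (Fin m) → ℝ)
    (w : EuclideanSpace ℝ (Fin m) → V) (y : EuclideanSpace ℝ (Fin m)) : V :=
  NormedSpace.exp (θ y • J) (w y)

/-- The covariant derivative `∂_αw + ∂_αθ Jw`, i.e. the partial derivative of `w` conjugated by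
`e^{θJ}`. -/
def covDeriv (J : V →L[ℝ] V) (θ : EuclideanSpace ℝ (Fin m) → ℝ)
    (w : EuclideanSpace ℝ (Fin m) → V) (α : Fin m) (y : EuclideanSpace ℝ (Fin m)) : V :=
  pderiv1 w α y + pderiv1 θ α y • J (w y)

lemma gaugeTransform_zero : gaugeTransform J 0 w = w := by
  ext x
  simp [gaugeTransform]

lemma gaugeTransform_eventuallyEq_self (h : θ =ᶠ[𝓝 x] 0) : gaugeTransform J θ w =ᶠ[𝓝 x] w := by
  filter_upwards [h] with y hy
  simp [gaugeTransform, hy]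

lemma differentiableOn_covDeriv (hU : IsOpen U) (hθ : ContDiffOn ℝ 2 θ U)
    (hw : ContDiffOn ℝ 2 w U) (α : Fin m) : DifferentiableOn ℝ (covDeriv J θ w α) U :=
  (differentiableOn_pderiv1 hU hw α).add <| (differentiableOn_pderiv1 hU hθ α).smul <|
    J.differentiable.comp_differentiableOn (hw.differentiableOn two_ne_zero)

lemma pderiv1_covDeriv (hU : IsOpen U) (hθ : ContDiffOn ℝ 2 θ U) (hw : ContDiffOn ℝ 2 w U)
    (hx : x ∈ U) (α : Fin m) :
    pderiv1 (covDeriv J θ w α) α x = pderiv2 w α α x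
      + (pderiv1 θ α x • J (pderiv1 w α x) + pderiv2 θ α α x • J (w x)) := by
  have hnhds := hU.mem_nhds hx
  have hw' := (hw.differentiableOn two_ne_zero).differentiableAt hnhds
  have hJw : DifferentiableAt ℝ (fun y => J (w y)) x := J.differentiableAt.comp x hw'
  have hdθ := (differentiableOn_pderiv1 hU hθ α).differentiableAt hnhds
  have hdw := (differentiableOn_pderiv1 hU hw α).differentiableAt hnhds
  calc pderiv1 (covDeriv J θ w α) α x
      = pderiv2 w α α x + pderiv1 (fun y => pderiv1 θ α y • J (w y)) α x :=
        pderiv1_add hdw (hdθ.smul hJw) α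
    _ = _ := by rw [pderiv1_smul hdθ hJw, pderiv1_clm J hw', pderiv2, pderiv2]

variable [CompleteSpace V]

lemma contDiffOn_gaugeTransform {k : WithTop ℕ∞} (hθ : ContDiffOn ℝ k θ U)
    (hw : ContDiffOn ℝ k w U) : ContDiffOn ℝ k (gaugeTransform J θ w) U := by
  have hexp : ContDiff ℝ k (NormedSpace.exp : (V →L[ℝ] V) → V →L[ℝ] V) :=
    contDiff_iff_contDiffAt.mpr fun T => (NormedSpace.exp_analytic (𝕂 := ℝ) T).contDiffAt
  exact (hexp.comp_contDiffOn (hθ.smul contDiffOn_const)).clm_apply hw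

lemma pderiv1_gaugeTransform (hθ : DifferentiableAt ℝ θ x) (hw : DifferentiableAt ℝ w x)
    (α : Fin m) :
    pderiv1 (gaugeTransform J θ w) α x = gaugeTransform J θ (covDeriv J θ w α) x := by
  have hexp : HasFDerivAt (fun y => NormedSpace.exp (θ y • J))
      ((fderiv ℝ θ x).smulRight (NormedSpace.exp (θ x • J) * J)) x :=
    (hasDerivAt_exp_smul_const J (θ x)).hasFDerivAt.comp x hθ.hasFDerivAt
  calc pderiv1 (gaugeTransform J θ w) α x
      = fderiv ℝ (fun y => NormedSpace.exp (θ y • J) (w y)) x (EuclideanSpace.single α 1) := rfl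
    _ = gaugeTransform J θ (covDeriv J θ w α) x := by
      rw [(hexp.clm_apply hw.hasFDerivAt).fderiv]
      simp [gaugeTransform, covDeriv, pderiv1]

lemma lap_gaugeTransform (hU : IsOpen U) (hθ : ContDiffOn ℝ 2 θ U) (hw : ContDiffOn ℝ 2 w U)
    (hx : x ∈ U) :
    lap (gaugeTransform J θ w) x = NormedSpace.exp (θ x • J) (lap w x
      + (lap θ x • J (w x) + (2 : ℝ) • ∑ α, pderiv1 θ α x • J (pderiv1 w α x))
      + (∑ α, pderiv1 θ α x ^ 2) • J (J (w x))) := by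
  have hpderiv (α : Fin m) :
      pderiv1 (gaugeTransform J θ w) α =ᶠ[𝓝 x] gaugeTransform J θ (covDeriv J θ w α) := by
    filter_upwards [hU.mem_nhds hx] with y hy using pderiv1_gaugeTransform
      ((hθ.differentiableOn two_ne_zero).differentiableAt (hU.mem_nhds hy))
      ((hw.differentiableOn two_ne_zero).differentiableAt (hU.mem_nhds hy)) α
  have hpderiv2 (α : Fin m) : pderiv2 (gaugeTransform J θ w) α α x
      = NormedSpace.exp (θ x • J) (covDeriv J θ (covDeriv J θ w α) α x) :=
    (pderiv1_eventuallyEq (hpderiv α) α).eq_of_nhds.trans <| pderiv1_gaugeTransform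
      ((hθ.differentiableOn two_ne_zero).differentiableAt (hU.mem_nhds hx))
      ((differentiableOn_covDeriv hU hθ hw α).differentiableAt (hU.mem_nhds hx)) α
  have hcov (α : Fin m) : covDeriv J θ (covDeriv J θ w α) α x = pderiv2 w α α x
      + (pderiv2 θ α α x • J (w x) + (2 : ℝ) • pderiv1 θ α x • J (pderiv1 w α x))
      + pderiv1 θ α x ^ 2 • J (J (w x)) := by
    rw [covDeriv, pderiv1_covDeriv hU hθ hw hx, covDeriv, map_add, map_smul]
    module
  simp only [lap, hpderiv2, hcov, ← map_sum, Finset.sum_add_distrib, Finset.smul_sum,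
    Finset.sum_smul]

end GaugeTransform

section SkewAdjoint

variable {V : Type*} [NormedAddCommGroup V] [InnerProductSpace ℝ V] [CompleteSpace V]
  {J : V →L[ℝ] V}

lemma inner_apply_self_eq_zero (hJ : J ∈ skewAdjoint (V →L[ℝ] V)) (a : V) : ⟪a, J a⟫ = 0 := by
  have hadj : J.adjoint = -J := hJ
  have hskew : ⟪a, J a⟫ = -⟪a, J a⟫ := by
    conv_lhs => rw [← ContinuousLinearMap.adjoint_inner_left, hadj, neg_apply, inner_neg_left,
      real_inner_comm]
  linarith

lemma norm_exp_smul_apply (hJ : J ∈ skewAdjoint (V →L[ℝ] V)) (s : ℝ) (a : V) :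
    ‖NormedSpace.exp (s • J) a‖ = ‖a‖ := by
  let +nondep : NormedAlgebra ℚ (V →L[ℝ] V) := .restrictScalars ℚ ℝ _
  have hsJ : s • J ∈ skewAdjoint (V →L[ℝ] V) := skewAdjoint.smul_mem s hJ
  have hunitary := NormedSpace.exp_mem_unitary_of_mem_skewAdjoint hsJ
  exact ContinuousLinearMap.norm_map_of_mem_unitary hunitary a

lemma norm_gaugeTransform (hJ : J ∈ skewAdjoint (V →L[ℝ] V)) {m : ℕ}
    (θ : EuclideanSpace ℝ (Fin m) → ℝ) (w : EuclideanSpace ℝ (Fin m) → V)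
    (x : EuclideanSpace ℝ (Fin m)) : ‖gaugeTransform J θ w x‖ = ‖w x‖ :=
  norm_exp_smul_apply hJ (θ x) (w x)

end SkewAdjoint

section NormPow

variable {X : Type*} [NormedAddCommGroup X] [InnerProductSpace ℝ X]

lemma hasFDerivAt_norm_smul_self (x : X) :
    HasFDerivAt (fun y : X => ‖y‖ • y)
      (‖x‖ • ContinuousLinearMap.id ℝ X + ‖x‖⁻¹ • InnerProductSpace.rankOne ℝ x x) x := by
  rcases eq_or_ne x 0 with rfl | hx
  · have hquadratic : (fun y : X => ‖y‖ • y) =O[𝓝 0] fun y => ‖y - 0‖ ^ 2 :=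
      .of_bound 1 (.of_forall fun y => by simp [norm_smul, sq])
    simpa using hquadratic.hasFDerivAt one_lt_two (𝕜 := ℝ)
  · have hnorm : HasFDerivAt (fun y : X => ‖y‖) (‖x‖⁻¹ • innerSL ℝ x) x := by
      have hsqrt := (hasStrictFDerivAt_norm_sq x).hasFDerivAt.sqrt (by simpa using hx)
      simp only [Real.sqrt_sq (norm_nonneg _)] at hsqrt
      convert hsqrt using 1
      ext v
      simp
      field_simp
    refine (hnorm.smul (hasFDerivAt_id x)).congr_fderiv ?_
    ext v
    simp [smul_smul]

/- For `k = 1` the factor `‖x‖` alone is not differentiable at `0`; only its product with `x`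
is `C¹`, which keeps the Noether flux `C¹` where the gradient vanishes. -/
lemma contDiff_norm_smul_self : ContDiff ℝ 1 fun x : X => ‖x‖ • x := by
  refine contDiff_one_iff_hasFDerivAt.mpr ⟨_, ?_, hasFDerivAt_norm_smul_self⟩
  have hrankOne : Continuous fun x : X => InnerProductSpace.rankOne ℝ x x :=
    ((ContinuousLinearMap.smulRightL ℝ X X).continuous.comp (innerSL ℝ).continuous).clm_apply
      continuous_id
  rw [continuous_iff_continuousAt]
  intro x
  rcases eq_or_ne x 0 with rfl | hx
  · have hbound (y : X) : ‖‖y‖⁻¹ • InnerProductSpace.rankOne ℝ y y‖ ≤ ‖y‖ := by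
      rw [norm_smul, norm_inv, norm_norm, InnerProductSpace.norm_rankOne, ← mul_assoc]
      exact mul_le_of_le_one_left (norm_nonneg _) inv_mul_le_one
    have htendsto := squeeze_zero_norm hbound (tendsto_norm_zero (E := X))
    exact ContinuousAt.add (by fun_prop) (by simpa [ContinuousAt] using htendsto)
  · have hinv : ContinuousAt (fun y : X => ‖y‖⁻¹) x := by fun_prop (disch := simpa using hx)
    exact ContinuousAt.add (by fun_prop) (hinv.smul hrankOne.continuousAt)

lemma contDiff_norm_pow_smul_self (k : ℕ) : ContDiff ℝ 1 fun x : X => ‖x‖ ^ k • x := by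
  rcases lt_trichotomy k 1 with hk | rfl | hk
  · simpa [Nat.lt_one_iff.mp hk] using contDiff_fun_id
  · simpa using contDiff_norm_smul_self
  · have hpow : ContDiff ℝ 1 fun x : X => ‖x‖ ^ k := by
      simpa using contDiff_norm_rpow (E := X) (p := k) (by exact_mod_cast hk)
    exact hpow.smul contDiff_id

lemma hasDerivAt_norm_pow_add_two {γ : ℝ → X} {γ' : X} {t : ℝ} (hγ : HasDerivAt γ γ' t) (k : ℕ) :
    HasDerivAt (fun s => ‖γ s‖ ^ (k + 2)) ((k + 2) * ‖γ t‖ ^ k * ⟪γ t, γ'⟫) t := by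
  have hpow : HasFDerivAt (fun x : X => ‖x‖ ^ (k + 2))
      (((k + 2) * ‖γ t‖ ^ k) • innerSL ℝ (γ t)) (γ t) := by
    have hrpow := hasFDerivAt_norm_rpow (γ t) (p := (k + 2 : ℕ)) (by push_cast; linarith)
    rw [show ((k + 2 : ℕ) : ℝ) - 2 = k by push_cast; ring] at hrpow
    simpa only [Real.rpow_natCast, Nat.cast_add, Nat.cast_ofNat] using mod_cast hrpow
  exact hpow.comp_hasDerivAt t hγ

end NormPow

section EnergyDensity

variable {m : ℕ} {V : Type*} [NormedAddCommGroup V] [InnerProductSpace ℝ V]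
  {w v : EuclideanSpace ℝ (Fin m) → V} {U : Set (EuclideanSpace ℝ (Fin m))}
  {x : EuclideanSpace ℝ (Fin m)}

/-- The gradient `∇w = (∂_1w, …, ∂_mw)` as an element of the Hilbert space `V^m`, whose norm is
`|∇w|`. -/
def gradVec (w : EuclideanSpace ℝ (Fin m) → V) (x : EuclideanSpace ℝ (Fin m)) :
    PiLp 2 fun _ : Fin m => V :=
  WithLp.toLp 2 fun α => pderiv1 w α x

lemma norm_gradVec (w : EuclideanSpace ℝ (Fin m) → V) (x : EuclideanSpace ℝ (Fin m)) :
    ‖gradVec w x‖ = gradNorm w x :=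
  PiLp.norm_eq_of_L2 _

lemma contDiffOn_gradVec {k l : WithTop ℕ∞} (hU : IsOpen U) (hw : ContDiffOn ℝ l w U)
    (hkl : k + 1 ≤ l) : ContDiffOn ℝ k (gradVec w) U :=
  (contDiffOn_piLp 2).mpr fun α => contDiffOn_pderiv1 hU hw hkl α

lemma contDiffOn_gradNorm_pow_smul_pderiv1 (hU : IsOpen U) (hw : ContDiffOn ℝ 2 w U) (k : ℕ)
    (α : Fin m) : ContDiffOn ℝ 1 (fun y => gradNorm w y ^ k • pderiv1 w α y) U := by
  have hflux : ContDiffOn ℝ 1 (fun y => ‖gradVec w y‖ ^ k • gradVec w y) U :=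
    (contDiff_norm_pow_smul_self k).comp_contDiffOn (contDiffOn_gradVec hU hw (by norm_num))
  simp only [norm_gradVec] at hflux
  exact (contDiffOn_piLp 2).mp hflux α

/-- The integrand `|Δw|² + ε|∇w|^p` of the perturbed Hessian energy, for maps into any inner
product space and any exponent `p`. -/
def energyDensity (eps : ℝ) (p : ℕ) (w : EuclideanSpace ℝ (Fin m) → V)
    (x : EuclideanSpace ℝ (Fin m)) : ℝ :=
  ‖lap w x‖ ^ 2 + eps * gradNorm w x ^ p

lemma energyDensity_nonneg {eps : ℝ} (heps : 0 ≤ eps) (p : ℕ)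
    (w : EuclideanSpace ℝ (Fin m) → V) (x : EuclideanSpace ℝ (Fin m)) :
    0 ≤ energyDensity eps p w x :=
  add_nonneg (sq_nonneg _) (mul_nonneg heps (pow_nonneg (Real.sqrt_nonneg _) p))

lemma energyDensity_eq_of_eventuallyEq (eps : ℝ) (p : ℕ) (h : w =ᶠ[𝓝 x] v) :
    energyDensity eps p w x = energyDensity eps p v x := by
  rw [energyDensity, lap_eq_of_eventuallyEq h, gradNorm_eq_of_eventuallyEq h, energyDensity]

lemma continuousOn_energyDensity (eps : ℝ) (p : ℕ) (hU : IsOpen U) (hw : ContDiffOn ℝ 2 w U) :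
    ContinuousOn (energyDensity eps p w) U := by
  have hlap : ContinuousOn (lap w) U := (contDiffOn_lap (k := 0) hU hw (by simp)).continuousOn
  have hgrad : ContinuousOn (gradVec w) U :=
    (contDiffOn_gradVec (k := 1) hU hw (by norm_num)).continuousOn
  exact (hlap.norm.pow 2).add
    (continuousOn_const.mul ((hgrad.norm.congr fun y _ => (norm_gradVec w y).symm).pow p))

end EnergyDensity

section FirstVariation

variable {m : ℕ} {V : Type*} [NormedAddCommGroup V] [InnerProductSpace ℝ V]
  {J : V →L[ℝ] V} {φ : EuclideanSpace ℝ (Fin m) → ℝ} {w : EuclideanSpace ℝ (Fin m) → V}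
  {U : Set (EuclideanSpace ℝ (Fin m))} {x : EuclideanSpace ℝ (Fin m)}

/-- The first variation of `Δw` along `e^{tφJ}w`, seen in the frame rotated by `e^{tφJ}`. -/
def lapVariation (J : V →L[ℝ] V) (φ : EuclideanSpace ℝ (Fin m) → ℝ)
    (w : EuclideanSpace ℝ (Fin m) → V) (x : EuclideanSpace ℝ (Fin m)) : V :=
  lap φ x • J (w x) + (2 : ℝ) • ∑ α, pderiv1 φ α x • J (pderiv1 w α x)

/-- The second-order coefficient of `Δ(e^{tφJ}w)` in `t`, seen in the frame rotated by
`e^{tφJ}`. -/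
def lapSecondVariation (J : V →L[ℝ] V) (φ : EuclideanSpace ℝ (Fin m) → ℝ)
    (w : EuclideanSpace ℝ (Fin m) → V) (x : EuclideanSpace ℝ (Fin m)) : V :=
  (∑ α, pderiv1 φ α x ^ 2) • J (J (w x))

/-- The first variation of `∇w` along `e^{tφJ}w`, seen in the frame rotated by `e^{tφJ}`. -/
def gradVariation (J : V →L[ℝ] V) (φ : EuclideanSpace ℝ (Fin m) → ℝ)
    (w : EuclideanSpace ℝ (Fin m) → V) (x : EuclideanSpace ℝ (Fin m)) :
    PiLp 2 fun _ : Fin m => V :=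
  WithLp.toLp 2 fun α => pderiv1 φ α x • J (w x)

lemma inner_lapVariation (a : V) :
    ⟪a, lapVariation J φ w x⟫
      = ⟪a, J (w x)⟫ * lap φ x + 2 * ∑ α, ⟪a, J (pderiv1 w α x)⟫ * pderiv1 φ α x := by
  simp only [lapVariation, inner_add_right, inner_smul_right, inner_sum, mul_comm]

lemma inner_gradVec_gradVariation :
    ⟪gradVec w x, gradVariation J φ w x⟫
      = ∑ α, ⟪pderiv1 w α x, J (w x)⟫ * pderiv1 φ α x := by
  simp only [gradVec, gradVariation, PiLp.inner_apply, inner_smul_right, mul_comm]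

lemma continuousOn_lapVariation (hU : IsOpen U) (hφ : ContDiffOn ℝ 2 φ U)
    (hw : ContDiffOn ℝ 2 w U) : ContinuousOn (lapVariation J φ w) U := by
  have hJw : ContinuousOn (fun x => J (w x)) U := J.continuous.comp_continuousOn hw.continuousOn
  have hdφ (α : Fin m) := (differentiableOn_pderiv1 hU hφ α).continuousOn
  have hJdw (α : Fin m) : ContinuousOn (fun x => J (pderiv1 w α x)) U :=
    J.continuous.comp_continuousOn (differentiableOn_pderiv1 hU hw α).continuousOn
  exact ((contDiffOn_lap (k := 0) hU hφ (by simp)).continuousOn.smul hJw).add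
    ((continuousOn_finsetSum _ fun α _ => (hdφ α).smul (hJdw α)).const_smul 2)

lemma continuousOn_lapSecondVariation (hU : IsOpen U) (hφ : ContDiffOn ℝ 2 φ U)
    (hw : ContDiffOn ℝ 2 w U) : ContinuousOn (lapSecondVariation J φ w) U := by
  have hJJw : ContinuousOn (fun x => J (J (w x))) U :=
    (J.comp J).continuous.comp_continuousOn hw.continuousOn
  exact (continuousOn_finsetSum _ fun α _ =>
    (differentiableOn_pderiv1 hU hφ α).continuousOn.pow 2).smul hJJw

lemma continuousOn_gradVariation (hU : IsOpen U) (hφ : ContDiffOn ℝ 2 φ U)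
    (hw : ContDiffOn ℝ 2 w U) : ContinuousOn (gradVariation J φ w) U := by
  have hJw : ContinuousOn (fun x => J (w x)) U := J.continuous.comp_continuousOn hw.continuousOn
  exact (PiLp.continuous_toLp 2 _).comp_continuousOn <| continuousOn_pi.mpr fun α =>
    (differentiableOn_pderiv1 hU hφ α).continuousOn.smul hJw

variable [CompleteSpace V]

lemma norm_lap_gaugeTransform (hJ : J ∈ skewAdjoint (V →L[ℝ] V)) (hU : IsOpen U)
    (hφ : ContDiffOn ℝ 2 φ U) (hw : ContDiffOn ℝ 2 w U) (hx : x ∈ U) (t : ℝ) :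
    ‖lap (gaugeTransform J (fun y => t • φ y) w) x‖ = ‖lap w x + t • lapVariation J φ w x
      + t ^ 2 • lapSecondVariation J φ w x‖ := by
  have hdiff := (hφ.differentiableOn two_ne_zero).differentiableAt (hU.mem_nhds hx)
  rw [lap_gaugeTransform hU (hφ.const_smul t) hw hx, norm_exp_smul_apply hJ,
    lap_const_smul hU hφ hx]
  simp only [pderiv1_const_smul hdiff]
  simp only [smul_eq_mul, mul_smul, lapVariation, lapSecondVariation, mul_pow, ← Finset.mul_sum,
    ← Finset.smul_sum, smul_add, smul_comm t (2 : ℝ)]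

lemma gradNorm_gaugeTransform (hJ : J ∈ skewAdjoint (V →L[ℝ] V)) (hφ : DifferentiableAt ℝ φ x)
    (hw : DifferentiableAt ℝ w x) (t : ℝ) :
    gradNorm (gaugeTransform J (fun y => t • φ y) w) x
      = ‖gradVec w x + t • gradVariation J φ w x‖ := by
  have htφ : DifferentiableAt ℝ (fun y => t • φ y) x := hφ.const_smul t
  rw [gradNorm, gradSq, PiLp.norm_eq_of_L2]
  simp only [pderiv1_gaugeTransform htφ hw, norm_gaugeTransform hJ, covDeriv,
    pderiv1_const_smul hφ, gradVec, gradVariation, PiLp.add_apply, PiLp.smul_apply, smul_assoc]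

lemma energyDensity_gaugeTransform (hJ : J ∈ skewAdjoint (V →L[ℝ] V)) (hU : IsOpen U)
    (hφ : ContDiffOn ℝ 2 φ U) (hw : ContDiffOn ℝ 2 w U) (hx : x ∈ U) (eps : ℝ) (p : ℕ) (t : ℝ) :
    energyDensity eps p (gaugeTransform J (fun y => t • φ y) w) x
      = ‖lap w x + t • lapVariation J φ w x + t ^ 2 • lapSecondVariation J φ w x‖ ^ 2
        + eps * ‖gradVec w x + t • gradVariation J φ w x‖ ^ p := by
  rw [energyDensity, norm_lap_gaugeTransform hJ hU hφ hw hx, gradNorm_gaugeTransform hJ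
    ((hφ.differentiableOn two_ne_zero).differentiableAt (hU.mem_nhds hx))
    ((hw.differentiableOn two_ne_zero).differentiableAt (hU.mem_nhds hx))]

end FirstVariation

section EnergyDerivative

lemma hasDerivAt_setIntegral {X E : Type*} [TopologicalSpace X] [MeasurableSpace X]
    [OpensMeasurableSpace X] [T2Space X] [NormedAddCommGroup E] [NormedSpace ℝ E]
    {μ : Measure X} [IsFiniteMeasureOnCompacts μ] {K : Set X} (hK : IsCompact K)
    {f f' : ℝ → X → E} {t₀ : ℝ} (hf : ∀ t, ContinuousOn (f t) K)
    (hf' : ContinuousOn (fun q : ℝ × X => f' q.1 q.2) (Set.univ ×ˢ K))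
    (hderiv : ∀ x ∈ K, ∀ t, HasDerivAt (f · x) (f' t x) t) :
    HasDerivAt (fun t => ∫ x in K, f t x ∂μ) (∫ x in K, f' t₀ x ∂μ) t₀ := by
  obtain ⟨C, hC⟩ := ((isCompact_closedBall t₀ 1).prod hK).exists_bound_of_continuousOn
    (hf'.mono (Set.prod_mono_left (Set.subset_univ _)))
  have hf't₀ : ContinuousOn (f' t₀) K :=
    hf'.comp (f := fun x => (t₀, x)) (by fun_prop) fun x hx => ⟨Set.mem_univ _, hx⟩
  refine (hasDerivAt_integral_of_dominated_loc_of_deriv_le (bound := fun _ => C)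
    (closedBall_mem_nhds t₀ one_pos)
    (.of_forall fun t => (hf t).aestronglyMeasurable_of_isCompact hK hK.measurableSet)
    ((hf t₀).integrableOn_compact' hK hK.measurableSet)
    (hf't₀.aestronglyMeasurable_of_isCompact hK hK.measurableSet) ?_
    (integrableOn_const hK.measure_ne_top) ?_).2
  · filter_upwards [ae_restrict_mem hK.measurableSet] with x hx t ht using hC (t, x) ⟨ht, hx⟩
  · filter_upwards [ae_restrict_mem hK.measurableSet] with x hx t _ using hderiv x hx t

lemma hasDerivAt_norm_sq_add_norm_pow {V W : Type*} [NormedAddCommGroup V]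
    [InnerProductSpace ℝ V] [NormedAddCommGroup W] [InnerProductSpace ℝ W] (a b c : V) (g h : W)
    (eps : ℝ) (k : ℕ) (t : ℝ) :
    HasDerivAt (fun s : ℝ => ‖a + s • b + s ^ 2 • c‖ ^ 2 + eps * ‖g + s • h‖ ^ (k + 2))
      (2 * ⟪a + t • b + t ^ 2 • c, b + (2 * t) • c⟫
        + eps * ((k + 2) * ‖g + t • h‖ ^ k * ⟪g + t • h, h⟫)) t := by
  have hquadratic : HasDerivAt (fun s : ℝ => a + s • b + s ^ 2 • c) (b + (2 * t) • c) t := by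
    simpa using (((hasDerivAt_id t).smul_const b).const_add a).fun_add
      ((hasDerivAt_pow 2 t).smul_const c)
  have haffine : HasDerivAt (fun s : ℝ => g + s • h) h t := by
    simpa using ((hasDerivAt_id t).smul_const h).const_add g
  exact hquadratic.norm_sq.add ((hasDerivAt_norm_pow_add_two haffine k).const_mul eps)

variable {m : ℕ} {V : Type*} [NormedAddCommGroup V] [InnerProductSpace ℝ V] [CompleteSpace V]
  {J : V →L[ℝ] V} {φ : EuclideanSpace ℝ (Fin m) → ℝ} {w : EuclideanSpace ℝ (Fin m) → V}
  {U K : Set (EuclideanSpace ℝ (Fin m))}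

lemma hasDerivAt_setIntegral_energyDensity_gaugeTransform (hJ : J ∈ skewAdjoint (V →L[ℝ] V))
    (hU : IsOpen U) (hφ : ContDiffOn ℝ 2 φ U) (hw : ContDiffOn ℝ 2 w U) (hK : IsCompact K)
    (hKU : K ⊆ U) (eps : ℝ) (k : ℕ) :
    HasDerivAt
      (fun t : ℝ => ∫ x in K, energyDensity eps (k + 2) (gaugeTransform J (fun y => t • φ y) w) x)
      (∫ x in K, (2 * ⟪lap w x, lapVariation J φ w x⟫
        + eps * ((k + 2) * gradNorm w x ^ k * ⟪gradVec w x, gradVariation J φ w x⟫))) 0 := by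
  have hwφ (t : ℝ) := contDiffOn_gaugeTransform (J := J) (hφ.const_smul t) hw
  have hlift {E : Type _} [TopologicalSpace E] {f : EuclideanSpace ℝ (Fin m) → E}
      (hf : ContinuousOn f U) :
      ContinuousOn (fun q : ℝ × EuclideanSpace ℝ (Fin m) => f q.2) (Set.univ ×ˢ K) :=
    hf.comp continuousOn_snd fun _ hq => hKU hq.2
  have hlap := hlift (contDiffOn_lap (k := 0) hU hw (by simp)).continuousOn
  have hgrad := hlift (contDiffOn_gradVec (k := 1) hU hw (by norm_num)).continuousOn
  have hlap' := hlift (continuousOn_lapVariation (J := J) hU hφ hw)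
  have hlap'' := hlift (continuousOn_lapSecondVariation (J := J) hU hφ hw)
  have hgrad' := hlift (continuousOn_gradVariation (J := J) hU hφ hw)
  have hderiv := hasDerivAt_setIntegral (μ := volume) (t₀ := 0) hK
    (fun t => (continuousOn_energyDensity eps (k + 2) hU (hwφ t)).mono hKU) (by fun_prop)
    fun x hx t => (hasDerivAt_norm_sq_add_norm_pow (lap w x) (lapVariation J φ w x)
      (lapSecondVariation J φ w x) (gradVec w x) (gradVariation J φ w x) eps k t
      ).congr_of_eventuallyEq <| .of_forall fun s =>
        energyDensity_gaugeTransform hJ hU hφ hw (hKU hx) eps (k + 2) s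
  simpa [norm_gradVec] using hderiv

end EnergyDerivative

section EulerLagrange

variable {m : ℕ} {V : Type*} [NormedAddCommGroup V] [InnerProductSpace ℝ V]
  {J : V →L[ℝ] V} {w : EuclideanSpace ℝ (Fin m) → V} {U : Set (EuclideanSpace ℝ (Fin m))}

/-- The first-order part `4⟨Δw, J∂_αw⟩ + ε(k+2)|∇w|^k⟨∂_αw, Jw⟩` of the Noether current of the
energy `∫ |Δw|² + ε|∇w|^(k+2)` for the symmetries `e^{tJ}` of the target. -/
def noetherFlux (eps : ℝ) (k : ℕ) (J : V →L[ℝ] V) (w : EuclideanSpace ℝ (Fin m) → V)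
    (α : Fin m) (x : EuclideanSpace ℝ (Fin m)) : ℝ :=
  4 * ⟪lap w x, J (pderiv1 w α x)⟫
    + eps * (k + 2) * ⟪gradNorm w x ^ k • pderiv1 w α x, J (w x)⟫

lemma contDiffOn_inner_gradNorm_pow_smul_pderiv1 (hU : IsOpen U) (hw : ContDiffOn ℝ 2 w U)
    (k : ℕ) (α : Fin m) :
    ContDiffOn ℝ 1 (fun x => ⟪gradNorm w x ^ k • pderiv1 w α x, J (w x)⟫) U :=
  (contDiffOn_gradNorm_pow_smul_pderiv1 hU hw k α).inner ℝ
    (J.contDiff.comp_contDiffOn (hw.of_le one_le_two))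

lemma contDiffOn_inner_lap_pderiv1 (hU : IsOpen U) (hw : ContDiffOn ℝ 3 w U) (α : Fin m) :
    ContDiffOn ℝ 1 (fun x => ⟪lap w x, J (pderiv1 w α x)⟫) U :=
  (contDiffOn_lap hU hw (by norm_num)).inner ℝ
    (J.contDiff.comp_contDiffOn (contDiffOn_pderiv1 hU hw (by norm_num) α))

lemma contDiffOn_noetherFlux (eps : ℝ) (k : ℕ) (hU : IsOpen U) (hw : ContDiffOn ℝ 3 w U)
    (α : Fin m) : ContDiffOn ℝ 1 (noetherFlux eps k J w α) U :=
  (contDiffOn_const.mul (contDiffOn_inner_lap_pderiv1 hU hw α)).add <| contDiffOn_const.mul <|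
    contDiffOn_inner_gradNorm_pow_smul_pderiv1 hU (hw.of_le (by norm_num)) k α

lemma pderiv1_noetherFlux (eps : ℝ) (k : ℕ) (hU : IsOpen U) (hw : ContDiffOn ℝ 3 w U)
    {x : EuclideanSpace ℝ (Fin m)} (hx : x ∈ U) (α : Fin m) :
    pderiv1 (noetherFlux eps k J w α) α x
      = 4 * pderiv1 (fun y => ⟪lap w y, J (pderiv1 w α y)⟫) α x + eps * (k + 2) *
        pderiv1 (fun y => ⟪gradNorm w y ^ k • pderiv1 w α y, J (w y)⟫) α x := by
  have hquad := ((contDiffOn_inner_lap_pderiv1 (J := J) hU hw α).differentiableOn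
    one_ne_zero).differentiableAt (hU.mem_nhds hx)
  have hpow := ((contDiffOn_inner_gradNorm_pow_smul_pderiv1 (J := J) hU
    (hw.of_le (by norm_num)) k α).differentiableOn one_ne_zero).differentiableAt (hU.mem_nhds hx)
  exact (pderiv1_add (hquad.const_mul 4) (hpow.const_mul (eps * (k + 2))) α).trans <|
    congrArg₂ (· + ·) (pderiv1_const_smul hquad 4 α) (pderiv1_const_smul hpow (eps * (k + 2)) α)

lemma energyVariation_eq_add_sum_noetherFlux (eps : ℝ) (k : ℕ)
    (φ : EuclideanSpace ℝ (Fin m) → ℝ) (x : EuclideanSpace ℝ (Fin m)) :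
    2 * ⟪lap w x, lapVariation J φ w x⟫
        + eps * ((k + 2) * gradNorm w x ^ k * ⟪gradVec w x, gradVariation J φ w x⟫)
      = 2 * ⟪lap w x, J (w x)⟫ * lap φ x + ∑ α, noetherFlux eps k J w α x * pderiv1 φ α x := by
  simp only [inner_lapVariation, inner_gradVec_gradVariation, noetherFlux, add_mul,
    Finset.sum_add_distrib, real_inner_smul_left, mul_assoc, ← Finset.mul_sum]
  ring

variable [CompleteSpace V]

lemma integral_noetherFlux_testFunction_eq_zero {Ω : Opens (EuclideanSpace ℝ (Fin m))}
    (hJ : J ∈ skewAdjoint (V →L[ℝ] V)) (hw : ContDiffOn ℝ 2 w Ω) (eps : ℝ) (k : ℕ) (φ : 𝓓(Ω, ℝ))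
    (hmin : IsLocalMin (fun t : ℝ => ∫ x in tsupport φ,
      energyDensity eps (k + 2) (gaugeTransform J (fun y => t • φ y) w) x) 0) :
    ∫ x, (2 * ⟪lap w x, J (w x)⟫ * lap φ x + ∑ α, noetherFlux eps k J w α x * pderiv1 φ α x)
      = 0 := by
  have hφ2 : ContDiffOn ℝ 2 φ Ω := (φ.contDiff.of_le ENat.LEInfty.out).contDiffOn
  have hderiv := hmin.hasDerivAt_eq_zero <|
    hasDerivAt_setIntegral_energyDensity_gaugeTransform hJ Ω.isOpen
      hφ2 hw φ.hasCompactSupport φ.tsupport_subset eps k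
  simp only [energyVariation_eq_add_sum_noetherFlux] at hderiv
  rw [← hderiv, setIntegral_eq_integral_of_forall_compl_eq_zero]
  intro x hx
  have hφ : φ =ᶠ[𝓝 x] fun _ => (0 : ℝ) := notMem_tsupport_iff_eventuallyEq.mp hx
  have hlap : lap φ x = 0 := by
    rw [lap_eq_of_eventuallyEq hφ]
    simp [lap, pderiv2, pderiv1]
  have hpderiv (α : Fin m) : pderiv1 φ α x = 0 := by
    rw [(pderiv1_eventuallyEq hφ α).eq_of_nhds]
    simp [pderiv1]
  simp [hlap, hpderiv]

theorem noether_conservation_law {Ω : Opens (EuclideanSpace ℝ (Fin m))}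
    (hJ : J ∈ skewAdjoint (V →L[ℝ] V)) (hw : ContDiffOn ℝ 4 w Ω) (eps : ℝ) (k : ℕ)
    (hmin : ∀ φ : 𝓓(Ω, ℝ), IsLocalMin (fun t : ℝ => ∫ x in tsupport φ,
      energyDensity eps (k + 2) (gaugeTransform J (fun y => t • φ y) w) x) 0) :
    ∀ x ∈ Ω, 2 * lap (fun y => ⟪lap w y, J (w y)⟫) x
      - 4 * ∑ α, pderiv1 (fun y => ⟪lap w y, J (pderiv1 w α y)⟫) α x
      - eps * (k + 2) * ∑ α, pderiv1 (fun y => ⟪gradNorm w y ^ k • pderiv1 w α y, J (w y)⟫) α x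
      = 0 := by
  intro x hx
  have hw3 : ContDiffOn ℝ 3 w Ω := hw.of_le (by norm_num)
  have hcharge : ContDiffOn ℝ 2 (fun y => ⟪lap w y, J (w y)⟫) Ω :=
    (contDiffOn_lap Ω.isOpen hw (by norm_num)).inner ℝ <|
      J.contDiff.comp_contDiffOn (hw.of_le (by norm_num))
  have hdiv := lap_sub_sum_pderiv1_eq_zero (contDiffOn_const.mul hcharge)
    (contDiffOn_noetherFlux eps k Ω.isOpen hw3) (fun φ =>
      integral_noetherFlux_testFunction_eq_zero hJ (hw.of_le (by norm_num)) eps k φ (hmin φ)) x hx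
  have hlap : lap (fun y => 2 * ⟪lap w y, J (w y)⟫) x = 2 * lap (fun y => ⟪lap w y, J (w y)⟫) x :=
    lap_const_smul Ω.isOpen hcharge hx 2
  simp only [hlap, pderiv1_noetherFlux eps k Ω.isOpen hw3 hx, Finset.sum_add_distrib,
    ← Finset.mul_sum] at hdiv
  linarith

end EulerLagrange

section Divergence

variable {m : ℕ} {V : Type*} [NormedAddCommGroup V] [InnerProductSpace ℝ V] [CompleteSpace V]
  {J : V →L[ℝ] V} {w : EuclideanSpace ℝ (Fin m) → V} {U : Set (EuclideanSpace ℝ (Fin m))}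
  {x : EuclideanSpace ℝ (Fin m)}

lemma sum_pderiv1_inner_pderiv1_eq (hJ : J ∈ skewAdjoint (V →L[ℝ] V)) (hU : IsOpen U)
    (hw : ContDiffOn ℝ 2 w U) (hx : x ∈ U) :
    ∑ α, pderiv1 (fun y => ⟪pderiv1 w α y, J (w y)⟫) α x = ⟪lap w x, J (w x)⟫ := by
  have hwx := (hw.differentiableOn two_ne_zero).differentiableAt (hU.mem_nhds hx)
  have hJw : DifferentiableAt ℝ (fun y => J (w y)) x := J.differentiableAt.comp x hwx
  rw [lap, sum_inner]
  refine Finset.sum_congr rfl fun α _ => ?_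
  have hdw := (differentiableOn_pderiv1 hU hw α).differentiableAt (hU.mem_nhds hx)
  calc pderiv1 (fun y => ⟪pderiv1 w α y, J (w y)⟫) α x
      = ⟪pderiv1 w α x, pderiv1 (fun y => J (w y)) α x⟫ + ⟪pderiv2 w α α x, J (w x)⟫ :=
        fderiv_inner_apply ℝ hdw hJw _
    _ = ⟪pderiv2 w α α x, J (w x)⟫ := by
      rw [pderiv1_clm J hwx, inner_apply_self_eq_zero hJ, zero_add]

end Divergence

section Wedge

variable {m n : ℕ} {U : Set (EuclideanSpace ℝ (Fin m))} {x : EuclideanSpace ℝ (Fin m)}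
  {a b : EuclideanSpace ℝ (Fin m) → EuclideanSpace ℝ (Fin (n + 1))}

/-- The infinitesimal rotation `E_{jk} − E_{kj}` in the `(j, k)` coordinate plane. -/
def planeRotation (j k : Fin (n + 1)) :
    EuclideanSpace ℝ (Fin (n + 1)) →L[ℝ] EuclideanSpace ℝ (Fin (n + 1)) :=
  InnerProductSpace.rankOne ℝ (EuclideanSpace.single j 1) (EuclideanSpace.single k 1)
    - InnerProductSpace.rankOne ℝ (EuclideanSpace.single k 1) (EuclideanSpace.single j 1)

lemma planeRotation_mem_skewAdjoint (j k : Fin (n + 1)) :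
    planeRotation j k ∈
      skewAdjoint (EuclideanSpace ℝ (Fin (n + 1)) →L[ℝ] EuclideanSpace ℝ (Fin (n + 1))) := by
  rw [skewAdjoint.mem_iff, ContinuousLinearMap.star_eq_adjoint, planeRotation, map_sub,
    InnerProductSpace.adjoint_rankOne, InnerProductSpace.adjoint_rankOne, neg_sub]

lemma inner_planeRotation (j k : Fin (n + 1)) (a b : EuclideanSpace ℝ (Fin (n + 1))) :
    ⟪a, planeRotation j k b⟫ = wedge a b j k := by
  simp [planeRotation, wedge, inner_sub_right, inner_smul_right,
    EuclideanSpace.inner_single_left, EuclideanSpace.inner_single_right, mul_comm]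

lemma smul_wedge (c : ℝ) (a b : EuclideanSpace ℝ (Fin (n + 1))) :
    c • wedge a b = wedge (c • a) b := by
  ext j k
  simp only [Pi.smul_apply, wedge, PiLp.smul_apply, smul_eq_mul]
  ring

lemma contDiffOn_wedge {l : WithTop ℕ∞} (ha : ContDiffOn ℝ l a U) (hb : ContDiffOn ℝ l b U) :
    ContDiffOn ℝ l (fun y => wedge (a y) (b y)) U := by
  simp only [contDiffOn_pi, ← inner_planeRotation]
  exact fun j k => ha.inner ℝ ((planeRotation j k).contDiff.comp_contDiffOn hb)

lemma pderiv1_wedge_apply (hU : IsOpen U) (ha : ContDiffOn ℝ 1 a U) (hb : ContDiffOn ℝ 1 b U)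
    (hx : x ∈ U) (α : Fin m) (j k : Fin (n + 1)) :
    pderiv1 (fun y => wedge (a y) (b y)) α x j k
      = pderiv1 (fun y => ⟪a y, planeRotation j k (b y)⟫) α x := by
  simp only [inner_planeRotation]
  exact (pderiv1_clm (.comp (.proj k) (.proj j))
    (((contDiffOn_wedge ha hb).differentiableOn one_ne_zero).differentiableAt (hU.mem_nhds hx))
    α).symm

lemma lap_wedge_apply (hU : IsOpen U) (ha : ContDiffOn ℝ 2 a U) (hb : ContDiffOn ℝ 2 b U)
    (hx : x ∈ U) (j k : Fin (n + 1)) :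
    lap (fun y => wedge (a y) (b y)) x j k
      = lap (fun y => ⟪a y, planeRotation j k (b y)⟫) x := by
  simp only [inner_planeRotation]
  exact (lap_clm (.comp (.proj k) (.proj j)) hU (contDiffOn_wedge ha hb) hx).symm

lemma sum_pderiv1_wedge_eq (hU : IsOpen U) (ha : ContDiffOn ℝ 2 a U) (hx : x ∈ U) :
    ∑ α, pderiv1 (fun y => wedge (pderiv1 a α y) (a y)) α x = wedge (lap a x) (a x) := by
  ext j k
  rw [Finset.sum_apply, Finset.sum_apply, ← inner_planeRotation,
    ← sum_pderiv1_inner_pderiv1_eq (planeRotation_mem_skewAdjoint j k) hU ha hx]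
  exact Finset.sum_congr rfl fun α _ => pderiv1_wedge_apply hU
    (contDiffOn_pderiv1 hU ha (by norm_num) α) (ha.of_le one_le_two) hx α j k

end Wedge

section Minimality

lemma setIntegral_le_of_setLIntegral_ofReal_le {X : Type*} [MeasurableSpace X] {μ : Measure X}
    {K U : Set X} {f g : X → ℝ} (hK : MeasurableSet K) (hU : MeasurableSet U) (hKU : K ⊆ U)
    (hf : 0 ≤ f) (hg : 0 ≤ g) (hfK : IntegrableOn f K μ) (hgK : IntegrableOn g K μ)
    (hfg : Set.EqOn f g (U \ K)) (hfin : ∫⁻ x in U, ENNReal.ofReal (f x) ∂μ ≠ ⊤)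
    (hle : ∫⁻ x in U, ENNReal.ofReal (f x) ∂μ ≤ ∫⁻ x in U, ENNReal.ofReal (g x) ∂μ) :
    ∫ x in K, f x ∂μ ≤ ∫ x in K, g x ∂μ := by
  have hout : ∫⁻ x in U \ K, ENNReal.ofReal (f x) ∂μ = ∫⁻ x in U \ K, ENNReal.ofReal (g x) ∂μ :=
    setLIntegral_congr_fun (hU.diff hK) fun x hx => congrArg ENNReal.ofReal (hfg hx)
  have hsplit (h : X → ℝ) : ∫⁻ x in U, ENNReal.ofReal (h x) ∂μ
      = ∫⁻ x in K, ENNReal.ofReal (h x) ∂μ + ∫⁻ x in U \ K, ENNReal.ofReal (h x) ∂μ := by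
    rw [← lintegral_inter_add_sdiff _ U hK, Set.inter_eq_self_of_subset_right hKU]
  rw [hsplit] at hfin
  rw [hsplit, hsplit, hout, ENNReal.add_le_add_iff_right (hout ▸ (ENNReal.add_ne_top.mp hfin).2),
    ← ofReal_integral_eq_lintegral_ofReal hfK (.of_forall hf),
    ← ofReal_integral_eq_lintegral_ofReal hgK (.of_forall hg)] at hle
  exact (ENNReal.ofReal_le_ofReal_iff (integral_nonneg hg)).mp hle

variable {m n : ℕ} {eps : ℝ} {u : EuclideanSpace ℝ (Fin m) → EuclideanSpace ℝ (Fin (n + 1))}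
  {J : EuclideanSpace ℝ (Fin (n + 1)) →L[ℝ] EuclideanSpace ℝ (Fin (n + 1))}

namespace IsHMinimizer

lemma setIntegral_energyDensity_le {K U : Set (EuclideanSpace ℝ (Fin m))}
    (hu : IsHMinimizer eps u U) (heps : 0 ≤ eps) (hU : IsOpen U) (hK : IsCompact K)
    (hKU : K ⊆ U)
    (hJ : J ∈ skewAdjoint (EuclideanSpace ℝ (Fin (n + 1)) →L[ℝ] EuclideanSpace ℝ (Fin (n + 1))))
    {θ : EuclideanSpace ℝ (Fin m) → ℝ} (hθ : ContDiff ℝ (⊤ : ℕ∞) θ)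
    (hθK : tsupport θ ⊆ K) :
    ∫ x in K, energyDensity eps (m + 1) u x
      ≤ ∫ x in K, energyDensity eps (m + 1) (gaugeTransform J θ u) x := by
  obtain ⟨hsmooth, hsphere, hfin, hmin⟩ := hu
  have hvsmooth := contDiffOn_gaugeTransform (J := J) hθ.contDiffOn hsmooth
  have hgerm (x) (hx : x ∉ K) : gaugeTransform J θ u =ᶠ[𝓝 x] u :=
    gaugeTransform_eventuallyEq_self (notMem_tsupport_iff_eventuallyEq.mp (mt (hθK ·) hx))
  have hle : HEnergy eps u U ≤ HEnergy eps (gaugeTransform J θ u) U :=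
    hmin _ hvsmooth (fun x hx => (norm_gaugeTransform hJ θ u x).trans (hsphere x hx))
      ⟨K, hK, hKU, fun x hx => (hgerm x hx).eq_of_nhds⟩
  have hint {v : EuclideanSpace ℝ (Fin m) → EuclideanSpace ℝ (Fin (n + 1))}
      (hv : ContDiffOn ℝ (⊤ : ℕ∞) v U) :
      IntegrableOn (energyDensity eps (m + 1) v) K :=
    ((continuousOn_energyDensity eps (m + 1) hU (hv.of_le ENat.LEInfty.out)).mono
      hKU).integrableOn_compact hK
  exact setIntegral_le_of_setLIntegral_ofReal_le hK.measurableSet hU.measurableSet hKU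
    (energyDensity_nonneg heps (m + 1) u) (energyDensity_nonneg heps (m + 1) _) (hint hsmooth)
    (hint hvsmooth)
    (fun x hx => (energyDensity_eq_of_eventuallyEq eps (m + 1) (hgerm x hx.2)).symm) hfin.ne hle

lemma isLocalMin_setIntegral_energyDensity {Ω : Opens (EuclideanSpace ℝ (Fin m))}
    (hu : IsHMinimizer eps u Ω) (heps : 0 ≤ eps)
    (hJ : J ∈ skewAdjoint (EuclideanSpace ℝ (Fin (n + 1)) →L[ℝ] EuclideanSpace ℝ (Fin (n + 1))))
    (φ : 𝓓(Ω, ℝ)) :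
    IsLocalMin (fun t : ℝ => ∫ x in tsupport φ,
      energyDensity eps (m + 1) (gaugeTransform J (fun y => t • φ y) u) x) 0 := by
  refine .of_forall fun t => ?_
  simp only [zero_smul]
  rw [show gaugeTransform J (fun _ => (0 : ℝ)) u = u from gaugeTransform_zero]
  exact hu.setIntegral_energyDensity_le heps Ω.isOpen φ.hasCompactSupport φ.tsupport_subset hJ
    (φ.contDiff.const_smul t) (tsupport_smul_subset_right (fun _ => t) φ)

end IsHMinimizer

end Minimality

/-- **Divergence (conservation-law) form of the Euler–Lagrange equation for `H_ε`**
(proof of Proposition 2.4). A smooth constrained minimizer `u` of `H_ε` on an open set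
`U` satisfies, pointwise on `U` and entrywise as matrices:
`2Δ(∑_α ∂_α(∂_αu ∧ u)) − 4∑_α ∂_α(Δu ∧ ∂_αu)
  − ε(m+1)∑_α ∂_α(|∇u|^{m-1}(∂_αu ∧ u)) = 0`. -/
theorem divergence_form_equation {m n : ℕ} (hm : 2 ≤ m) (hn : 1 ≤ n)
    (eps : ℝ) (heps : 0 < eps)
    (U : Set (EuclideanSpace ℝ (Fin m))) (hU : IsOpen U)
    (u : EuclideanSpace ℝ (Fin m) → EuclideanSpace ℝ (Fin (n + 1)))
    (hu : IsHMinimizer eps u U) :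
    ∀ x ∈ U,
      (2 : ℝ) • lap (fun y =>
            ∑ α : Fin m, pderiv1 (fun z => wedge (pderiv1 u α z) (u z)) α y) x
        - (4 : ℝ) • (∑ α : Fin m, pderiv1 (fun z => wedge (lap u z) (pderiv1 u α z)) α x)
        - (eps * (m + 1)) •
            (∑ α : Fin m,
              pderiv1 (fun z => gradNorm u z ^ (m - 1) • wedge (pderiv1 u α z) (u z)) α x)
        = 0 := by
  intro x hx
  obtain ⟨k, rfl⟩ : ∃ k, m = k + 1 := ⟨m - 1, by omega⟩
  have hu4 : ContDiffOn ℝ 4 u U := hu.1.of_le ENat.LEInfty.out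
  have hu2 : ContDiffOn ℝ 2 u U := hu.1.of_le ENat.LEInfty.out
  have hlap : ContDiffOn ℝ 2 (lap u) U := contDiffOn_lap hU hu4 (by norm_num)
  have hpderiv (α) : ContDiffOn ℝ 1 (pderiv1 u α) U := contDiffOn_pderiv1 hU hu2 (by norm_num) α
  have hinner : (fun y => ∑ α, pderiv1 (fun z => wedge (pderiv1 u α z) (u z)) α y)
      =ᶠ[𝓝 x] fun y => wedge (lap u y) (u y) := by
    filter_upwards [hU.mem_nhds hx] with y hy using sum_pderiv1_wedge_eq hU hu2 hy
  rw [lap_eq_of_eventuallyEq hinner]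
  ext i j
  have hconservation := noether_conservation_law (Ω := ⟨U, hU⟩)
    (planeRotation_mem_skewAdjoint i j) hu4 eps k
    (hu.isLocalMin_setIntegral_energyDensity heps.le (planeRotation_mem_skewAdjoint i j)) x hx
  have hcast : ((k + 1 : ℕ) : ℝ) + 1 = k + 2 := by push_cast; ring
  simpa only [Pi.sub_apply, Pi.smul_apply, Pi.zero_apply, Finset.sum_apply, smul_eq_mul,
    smul_wedge, Nat.add_sub_cancel, hcast, lap_wedge_apply hU hlap hu2 hx,
    pderiv1_wedge_apply hU (hlap.of_le one_le_two) (hpderiv _) hx,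
    pderiv1_wedge_apply hU (contDiffOn_gradNorm_pow_smul_pderiv1 hU hu2 _ _)
      (hu2.of_le one_le_two) hx] using hconservation

end
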